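/- Let (G_n) be a sequence of connected d-regular simple graphs on n vertices with d = d(n) → ∞ and ε = ε(n) ∈ (0,1) with ε(n)·log d → ∞, satisfying properties P1, P2, P3 and P4, and set s = ⌈2·log n/(ε·log d)⌉. Then sup |R_{γ_S} − 2| → 0 as n → ∞, where the supremum is over all vertex sets S of G_n with |S| = s inducing a connected subgraph, γ_S is the vertex obtained by contracting S (retaining all edges, with edges inside S becoming loops at γ_S), and R_{γ_S} = Σ_{k=0}^{T} (M_Γ^k)_{γ_S,γ_S} is the expected number of visits to γ_S within the mixing time T by the lazy walk on the contracted multigraph started at γ_S. -/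

import Mathlib

open Finset Filter

noncomputable section
open scoped Classical

variable {V : Type*} [Fintype V] [DecidableEq V]

/-- Transition matrix of the simple random walk on a `d`-regular graph `G`:
from `u` the walk moves to a uniformly random neighbour. -/
def simpleStep (G : SimpleGraph V) (d : ℕ) : Matrix V V ℝ :=
  Matrix.of fun u v => if G.Adj u v then ((d : ℝ))⁻¹ else 0

/-- Transition matrix of the lazy random walk `M = (1/2)(I + A/d)`. -/
def lazyStep (G : SimpleGraph V) (d : ℕ) : Matrix V V ℝ :=
  Matrix.of fun u v =>
    (if u = v then (2 : ℝ)⁻¹ else 0) + (2 : ℝ)⁻¹ * (if G.Adj u v then ((d : ℝ))⁻¹ else 0)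

/-- Probability that the first `t` steps of the Markov chain with transition
matrix `M` started at `u` form a trajectory satisfying `E`:  the sum, over all
paths realizing the event, of the product of the transition probabilities. -/
def walkProb (M : Matrix V V ℝ) (u : V) (t : ℕ)
    (E : (Fin (t + 1) → V) → Prop) : ℝ :=
  ∑ p : Fin (t + 1) → V,
    if p 0 = u ∧ E p then ∏ i : Fin t, M (p i.castSucc) (p i.succ) else 0

/-- The mixing time `T = min { t ≥ 1 : |M^t x y - 1/n| ≤ n⁻³ for all x,y }`. -/
def mixingTime (G : SimpleGraph V) (d : ℕ) : ℕ :=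
  sInf {T : ℕ | 1 ≤ T ∧ ∀ x y : V,
    |((lazyStep G d) ^ T) x y - ((Fintype.card V : ℝ))⁻¹| ≤ (((Fintype.card V : ℝ)) ^ 3)⁻¹}

/-- Property P1: the second largest eigenvalue of the lazy walk matrix is at
most `1 - g`, stated via the Rayleigh quotient on the orthogonal complement of
the constant (top) eigenvector. -/
def SpectralGapLB (G : SimpleGraph V) (d : ℕ) (g : ℝ) : Prop :=
  ∀ x : V → ℝ, (∑ v : V, x v) = 0 →
    (∑ u : V, ∑ v : V, x u * lazyStep G d u v * x v) ≤ (1 - g) * ∑ v : V, x v ^ 2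

/-- Property P3 with constant `ρ₂`: for vertices `u,v` at distance at most
`d^ε`, the number of neighbours `w` of `v` with `dist w u ≤ dist u v` is at
most `ρ₂ · dist u v`. -/
def PropP3 (G : SimpleGraph V) (d : ℕ) (ε ρ₂ : ℝ) : Prop :=
  ∀ u v : V, (G.dist u v : ℝ) ≤ (d : ℝ) ^ ε →
    (((univ : Finset V).filter fun w => G.Adj v w ∧ G.dist w u ≤ G.dist u v).card : ℝ) ≤
      ρ₂ * (G.dist u v : ℝ)

/-- The number of edges of `G` with both endpoints in `S`. -/
def edgesInside (G : SimpleGraph V) (S : Finset V) : ℕ :=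
  ((S ×ˢ S).filter fun p => G.Adj p.1 p.2).card / 2

/-- The set of vertices of `G` not visited by the trajectory `p` at any step
`s` with `t₀ ≤ s` contains a connected (in the induced subgraph) subset of at
least `K` vertices; equivalently, the subgraph induced by this vacant set has a
connected component with at least `K` vertices. -/
def bigVacantComponent (G : SimpleGraph V) {t : ℕ} (p : Fin (t + 1) → V)
    (t₀ : ℕ) (K : ℝ) : Prop :=
  ∃ S : Finset V, (∀ v ∈ S, ∀ s : Fin (t + 1), t₀ ≤ (s : ℕ) → p s ≠ v) ∧
    (G.induce (S : Set V)).Connected ∧ K ≤ (S.card : ℝ)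


/-- Transition matrix of the lazy walk on the multigraph obtained from a
`d`-regular graph `G` by contracting the vertex set `S` to a single vertex
`γ_S` (represented by `Sum.inr ()`), retaining all edges; `γ_S` has degree
`d·|S|` with loops (from edges inside `S`) counted twice. -/
def contractedLazy (G : SimpleGraph V) (d : ℕ) (S : Finset V) :
    Matrix ({x : V // x ∉ S} ⊕ Unit) ({x : V // x ∉ S} ⊕ Unit) ℝ :=
  Matrix.of fun a b =>
    match a, b with
    | Sum.inl x, Sum.inl y => lazyStep G d x.1 y.1
    | Sum.inl x, Sum.inr _ =>
        ((S.filter fun z => G.Adj x.1 z).card : ℝ) / (2 * (d : ℝ))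
    | Sum.inr _, Sum.inl y =>
        ((S.filter fun z => G.Adj z y.1).card : ℝ) / (2 * ((d : ℝ) * (S.card : ℝ)))
    | Sum.inr _, Sum.inr _ =>
        (2 : ℝ)⁻¹ + (edgesInside G S : ℝ) / ((d : ℝ) * (S.card : ℝ))

/-!
Write `P` for the simple walk on `G`, `M_Γ` for the lazy walk on the contracted multigraph and `R`
for the expected number of visits. As the lazy walk stays put with probability at least `1/2`, we
have `M_Γ^k(γ_S, γ_S) ≥ 2⁻ᵏ`, hence `R ≥ 2 - 2⁻ᵀ`.

For the upper bound let `g` be the expected number of visits of `P` to `S` before time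
`K = ⌊d^{ε/2}⌋`. The function `F = min(1, g)` equals `1` on `S`, so it descends to the contracted
multigraph, where `(M_Γ F)(x) ≤ F(x) + |S| β^K` for `x ≠ γ_S` and
`(M_Γ F)(γ_S) ≤ F(γ_S) - (1/2 - o(1))`. Summing the drift of `F` along the chain gives
`(1/2 - o(1)) R ≤ 1 + (T + 1) |S| β^K`.

Here `β` is such that `P^k(x, y) ≤ βᵏ` for `k ≤ K`: by P3 the walk drifts away from `y` up to
distance `d^ε`, which allows `β = O(d^{-1/4})`. A union bound over `S` would lose a factor `|S|` in
the drift at `γ_S`. Instead, `⟨1_S, P^{2k} 1_S⟩ |S| ≥ ⟨1_S, P^k 1_S⟩²` by Cauchy-Schwarz, so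
doubling `k` until it is comparable to `K` and taking roots leaves only a factor `E^{2k}` as soon
as `|S| ≤ E^K`. By P2 we have `log log n ≤ d^{ε/2}`, so a constant `E` suffices and `β^K` also
absorbs `T |S|`, where `T = O(d^{ρ₁} log n)` by the spectral gap.
-/

open scoped Matrix Topology

/-- The indicator function of `S`, as a vector on which matrices act; written `𝟙 S`. -/
def indicatorVec {W : Type*} (S : Finset W) : W → ℝ :=
  (S : Set W).indicator 1

local prefix:max "𝟙" => indicatorVec

lemma exists_mul_two_pow_le_and_le {k K : ℕ} (hk : 0 < k) (hkK : k ≤ K) :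
    ∃ r, k * 2 ^ r ≤ K ∧ K ≤ 2 * (k * 2 ^ r) := by
  have hlog : 2 ^ Nat.log 2 (K / k) ≤ K / k :=
    Nat.pow_log_le_self 2 (Nat.div_pos hkK hk).ne'
  refine ⟨Nat.log 2 (K / k), (Nat.mul_le_mul_left k hlog).trans (Nat.mul_div_le K k), ?_⟩
  have hK := (Nat.div_lt_iff_lt_mul hk).1 (Nat.lt_pow_succ_log_self one_lt_two (K / k))
  rw [pow_succ] at hK
  linarith

section Matrices

variable {W : Type*} [Fintype W]

lemma sq_dotProduct_mulVec_le_of_posSemidef {M : Matrix W W ℝ} (hM : M.PosSemidef)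
    (x y : W → ℝ) : (x ⬝ᵥ M *ᵥ y) ^ 2 ≤ (x ⬝ᵥ M *ᵥ x) * (y ⬝ᵥ M *ᵥ y) := by
  classical
  have hsymm : y ⬝ᵥ M *ᵥ x = x ⬝ᵥ M *ᵥ y := by
    rw [Matrix.dotProduct_mulVec, ← Matrix.mulVec_transpose, dotProduct_comm,
      ← Matrix.conjTranspose_eq_transpose_of_trivial, hM.isHermitian.eq]
  have h := (Matrix.toBilin' M).apply_mul_apply_le_of_forall_zero_le
    (fun z => by simpa [Matrix.toBilin'_apply'] using hM.dotProduct_mulVec_nonneg z) x y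
  simpa only [Matrix.toBilin'_apply', hsymm, sq] using h

lemma sq_dotProduct_le (x y : W → ℝ) : (x ⬝ᵥ y) ^ 2 ≤ (x ⬝ᵥ x) * (y ⬝ᵥ y) := by
  classical
  simpa using sq_dotProduct_mulVec_le_of_posSemidef Matrix.PosSemidef.one x y

lemma dotProduct_mulVec_comm_of_isSymm {A : Matrix W W ℝ} (hA : A.IsSymm) (x y : W → ℝ) :
    x ⬝ᵥ A *ᵥ y = A *ᵥ x ⬝ᵥ y := by
  rw [Matrix.dotProduct_mulVec, ← Matrix.mulVec_transpose, hA.eq]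

lemma dotProduct_mulVec_self_le_of_posSemidef {M : Matrix W W ℝ} (hM : M.PosSemidef) {r : ℝ}
    (hr : 0 ≤ r) {x : W → ℝ}
    (hx : x ⬝ᵥ M *ᵥ x ≤ r * (x ⬝ᵥ x))
    (hMx : M *ᵥ x ⬝ᵥ M *ᵥ (M *ᵥ x) ≤ r * (M *ᵥ x ⬝ᵥ M *ᵥ x)) :
    M *ᵥ x ⬝ᵥ M *ᵥ x ≤ r ^ 2 * (x ⬝ᵥ x) := by
  have hself (y : W → ℝ) : 0 ≤ y ⬝ᵥ y := by simpa using dotProduct_self_star_nonneg y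
  have hform : 0 ≤ x ⬝ᵥ M *ᵥ x := by simpa using hM.dotProduct_mulVec_nonneg x
  rcases (hself (M *ᵥ x)).eq_or_lt with hzero | hpos
  · rw [← hzero]
    exact mul_nonneg (sq_nonneg r) (hself x)
  · refine le_of_mul_le_mul_left ?_ hpos
    calc (M *ᵥ x ⬝ᵥ M *ᵥ x) * (M *ᵥ x ⬝ᵥ M *ᵥ x)
        = (M *ᵥ x ⬝ᵥ M *ᵥ x) ^ 2 := (sq _).symm
      _ ≤ (M *ᵥ x ⬝ᵥ M *ᵥ (M *ᵥ x)) * (x ⬝ᵥ M *ᵥ x) :=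
        sq_dotProduct_mulVec_le_of_posSemidef hM (M *ᵥ x) x
      _ ≤ (r * (M *ᵥ x ⬝ᵥ M *ᵥ x)) * (r * (x ⬝ᵥ x)) := by gcongr
      _ = (M *ᵥ x ⬝ᵥ M *ᵥ x) * (r ^ 2 * (x ⬝ᵥ x)) := by ring

lemma indicatorVec_nonneg {W : Type*} (S : Finset W) : 0 ≤ 𝟙 S :=
  Set.indicator_nonneg fun _ _ => zero_le_one

lemma indicatorVec_dotProduct (S : Finset W) (g : W → ℝ) : 𝟙 S ⬝ᵥ g = ∑ x ∈ S, g x := by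
  simp [dotProduct, indicatorVec, Set.indicator_apply]

lemma indicatorVec_dotProduct_self (S : Finset W) : 𝟙 S ⬝ᵥ 𝟙 S = (#S : ℝ) := by
  rw [indicatorVec_dotProduct]
  simp +contextual [indicatorVec, Set.indicator_apply]

lemma mulVec_indicatorVec_apply (A : Matrix W W ℝ) (S : Finset W) (x : W) :
    (A *ᵥ 𝟙 S) x = ∑ y ∈ S, A x y := by
  rw [Matrix.mulVec, dotProduct_comm, indicatorVec_dotProduct]

lemma mulVec_indicatorVec_apply_le {A : Matrix W W ℝ} {η : ℝ} (hA : ∀ x y, A x y ≤ η)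
    (S : Finset W) (x : W) : (A *ᵥ 𝟙 S) x ≤ #S * η := by
  rw [mulVec_indicatorVec_apply]
  exact (sum_le_card_nsmul S _ η fun y _ => hA x y).trans_eq (nsmul_eq_mul _ _)

lemma indicatorVec_dotProduct_mulVec_le {A : Matrix W W ℝ} {η : ℝ} (hA : ∀ x y, A x y ≤ η)
    (S : Finset W) : 𝟙 S ⬝ᵥ A *ᵥ 𝟙 S ≤ (#S : ℝ) ^ 2 * η := by
  rw [indicatorVec_dotProduct]
  refine (sum_le_card_nsmul S _ _ fun x _ => mulVec_indicatorVec_apply_le hA S x).trans_eq ?_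
  rw [nsmul_eq_mul]
  ring

lemma indicatorVec_dotProduct_mulVec_nonneg {A : Matrix W W ℝ} (hA : ∀ x y, 0 ≤ A x y)
    (S : Finset W) : 0 ≤ 𝟙 S ⬝ᵥ A *ᵥ 𝟙 S := by
  simp only [indicatorVec_dotProduct, mulVec_indicatorVec_apply]
  exact sum_nonneg fun x _ => sum_nonneg fun y _ => hA x y

variable [DecidableEq W]

lemma sq_dotProduct_pow_mulVec_le {A : Matrix W W ℝ} (hA : A.IsSymm) (f : W → ℝ) (k : ℕ) :
    (f ⬝ᵥ (A ^ k) *ᵥ f) ^ 2 ≤ (f ⬝ᵥ f) * (f ⬝ᵥ (A ^ (2 * k)) *ᵥ f) := by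
  rw [two_mul, pow_add, ← Matrix.mulVec_mulVec,
    dotProduct_mulVec_comm_of_isSymm (hA.pow k) f (_ *ᵥ f)]
  exact sq_dotProduct_le f _

lemma div_dotProduct_pow_two_pow_le {A : Matrix W W ℝ} (hA : A.IsSymm) {f : W → ℝ} (hf : 0 < f ⬝ᵥ f)
    (k r : ℕ) :
    (f ⬝ᵥ (A ^ k) *ᵥ f / f ⬝ᵥ f) ^ 2 ^ r ≤ f ⬝ᵥ (A ^ (k * 2 ^ r)) *ᵥ f / f ⬝ᵥ f := by
  induction r generalizing k with
  | zero => simp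
  | succ r ih =>
    have hstep : (f ⬝ᵥ (A ^ k) *ᵥ f / f ⬝ᵥ f) ^ 2 ≤ f ⬝ᵥ (A ^ (2 * k)) *ᵥ f / f ⬝ᵥ f := by
      rw [div_pow, div_le_div_iff₀ (by positivity) hf, sq (f ⬝ᵥ f)]
      have := sq_dotProduct_pow_mulVec_le hA f k
      nlinarith
    calc (f ⬝ᵥ (A ^ k) *ᵥ f / f ⬝ᵥ f) ^ 2 ^ (r + 1)
        = ((f ⬝ᵥ (A ^ k) *ᵥ f / f ⬝ᵥ f) ^ 2) ^ 2 ^ r := by rw [← pow_mul, pow_succ']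
      _ ≤ (f ⬝ᵥ (A ^ (2 * k)) *ᵥ f / f ⬝ᵥ f) ^ 2 ^ r := by gcongr
      _ ≤ f ⬝ᵥ (A ^ (2 * k * 2 ^ r)) *ᵥ f / f ⬝ᵥ f := ih (2 * k)
      _ = f ⬝ᵥ (A ^ (k * 2 ^ (r + 1))) *ᵥ f / f ⬝ᵥ f := by
        rw [mul_comm 2 k, mul_assoc, ← pow_succ']

lemma indicatorVec_dotProduct_pow_mulVec_div_card_le {A : Matrix W W ℝ} (hA : A.IsSymm)
    (hA0 : ∀ x y, 0 ≤ A x y) {S : Finset W} (hS : S.Nonempty) {K : ℕ} {β E : ℝ} (hβ : 0 ≤ β)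
    (hE : 1 ≤ E) (hAβ : ∀ k ≤ K, ∀ x y, (A ^ k) x y ≤ β ^ k) (hSE : (#S : ℝ) ≤ E ^ K) {k : ℕ}
    (hk0 : 0 < k) (hk : k ≤ K) :
    𝟙 S ⬝ᵥ (A ^ k) *ᵥ 𝟙 S / #S ≤ (E ^ 2 * β) ^ k := by
  have hS0 : (0 : ℝ) < #S := mod_cast hS.card_pos
  obtain ⟨r, hr, hKr⟩ := exists_mul_two_pow_le_and_le hk0 hk
  have havg : 0 ≤ 𝟙 S ⬝ᵥ (A ^ k) *ᵥ 𝟙 S / #S :=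
    div_nonneg (indicatorVec_dotProduct_mulVec_nonneg (Matrix.pow_apply_nonneg hA0 k) S) hS0.le
  refine le_of_pow_le_pow_left₀ (n := 2 ^ r) (by positivity) (by positivity) ?_
  calc (𝟙 S ⬝ᵥ (A ^ k) *ᵥ 𝟙 S / #S) ^ 2 ^ r
      ≤ 𝟙 S ⬝ᵥ (A ^ (k * 2 ^ r)) *ᵥ 𝟙 S / #S := by
        rw [← indicatorVec_dotProduct_self] at hS0 ⊢
        exact div_dotProduct_pow_two_pow_le hA hS0 k r
    _ ≤ #S * β ^ (k * 2 ^ r) := by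
        rw [div_le_iff₀ hS0]
        exact (indicatorVec_dotProduct_mulVec_le (hAβ _ hr) S).trans_eq (by ring)
    _ ≤ E ^ (2 * (k * 2 ^ r)) * β ^ (k * 2 ^ r) := by
        gcongr
        exact hSE.trans (pow_le_pow_right₀ hE hKr)
    _ = ((E ^ 2 * β) ^ k) ^ 2 ^ r := by rw [← pow_mul, mul_pow, ← pow_mul]

lemma sum_indicatorVec_dotProduct_pow_mulVec_le {A : Matrix W W ℝ} (hA : A.IsSymm)
    (hA0 : ∀ x y, 0 ≤ A x y) {S : Finset W} (hS : S.Nonempty) {K : ℕ} {β E : ℝ} (hβ : 0 ≤ β)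
    (hE : 1 ≤ E) (hAβ : ∀ k ≤ K, ∀ x y, (A ^ k) x y ≤ β ^ k) (hSE : (#S : ℝ) ≤ E ^ K)
    (hEβ : E ^ 2 * β ≤ 1 / 2) :
    ∑ k ∈ range K, 𝟙 S ⬝ᵥ (A ^ (k + 1)) *ᵥ 𝟙 S ≤ #S * (2 * (E ^ 2 * β)) := by
  have hS0 : (0 : ℝ) < #S := mod_cast hS.card_pos
  set y := E ^ 2 * β
  have hy : 0 ≤ y := by positivity
  calc ∑ k ∈ range K, 𝟙 S ⬝ᵥ (A ^ (k + 1)) *ᵥ 𝟙 S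
      ≤ ∑ k ∈ range K, #S * y ^ (k + 1) := by
        refine sum_le_sum fun k hk => ?_
        rw [← div_le_iff₀' hS0]
        exact indicatorVec_dotProduct_pow_mulVec_div_card_le hA hA0 hS hβ hE hAβ hSE k.succ_pos
          (mem_range.1 hk)
    _ = #S * (y * ∑ k ∈ range K, y ^ k) := by simp only [mul_sum, pow_succ']
    _ ≤ #S * (y * (1 - y)⁻¹) := by
        gcongr
        exact ((summable_geometric_of_lt_one hy (by linarith)).sum_le_tsum _
          fun _ _ => by positivity).trans_eq (tsum_geometric_of_lt_one hy (by linarith))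
    _ ≤ #S * (2 * y) := by
        rw [mul_comm 2 y]
        gcongr
        exact inv_le_of_inv_le₀ (by norm_num) (by linarith)

/-- The expected number of visits to `a` at the times `0, …, t` by the chain with transition
matrix `Q` started at `a`. -/
def expectedVisits (Q : Matrix W W ℝ) (a : W) (t : ℕ) : ℝ :=
  ∑ k ∈ range (t + 1), (Q ^ k) a a

lemma pow_le_pow_apply_self {Q : Matrix W W ℝ} (hQ : ∀ x y, 0 ≤ Q x y) {a : W} {c : ℝ}
    (hc : 0 ≤ c) (hca : c ≤ Q a a) (k : ℕ) : c ^ k ≤ (Q ^ k) a a := by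
  induction k with
  | zero => simp
  | succ k ih =>
    rw [pow_succ, pow_succ, Matrix.mul_apply]
    calc c ^ k * c ≤ (Q ^ k) a a * Q a a := by
          have := Matrix.pow_apply_nonneg hQ k a a
          gcongr
      _ ≤ ∑ y, (Q ^ k) a y * Q y a :=
        single_le_sum (f := fun y => (Q ^ k) a y * Q y a)
          (fun y _ => mul_nonneg (Matrix.pow_apply_nonneg hQ k a y) (hQ y a)) (mem_univ a)

lemma two_sub_two_inv_pow_le_expectedVisits {Q : Matrix W W ℝ} (hQ : ∀ x y, 0 ≤ Q x y) {a : W}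
    (ha : 2⁻¹ ≤ Q a a) (t : ℕ) : 2 - 2⁻¹ ^ t ≤ expectedVisits Q a t := by
  have hgeom : ∑ k ∈ range (t + 1), (2⁻¹ : ℝ) ^ k = 2 - 2⁻¹ ^ t := by
    rw [geom_sum_eq (by norm_num), pow_succ]
    ring
  rw [← hgeom]
  exact sum_le_sum fun k _ => pow_le_pow_apply_self hQ (by norm_num) ha k

lemma mul_expectedVisits_le {Q : Matrix W W ℝ} (hQ : Q ∈ Matrix.rowStochastic ℝ W) {F : W → ℝ}
    (hF : ∀ x, 0 ≤ F x) {a : W} {c τ : ℝ} (hdrift : Q *ᵥ F ≤ F + τ • 1 - Pi.single a c)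
    (t : ℕ) : c * expectedVisits Q a t ≤ F a + (t + 1) * τ := by
  have hstep (k : ℕ) :
      c * (Q ^ k) a a ≤ ((Q ^ k) *ᵥ F) a - ((Q ^ (k + 1)) *ᵥ F) a + τ := by
    have hQk := pow_mem hQ k
    have hmono : ((Q ^ k) *ᵥ (Q *ᵥ F)) a ≤ ((Q ^ k) *ᵥ (F + τ • 1 - Pi.single a c)) a :=
      dotProduct_le_dotProduct_of_nonneg_left hdrift
        fun _ => Matrix.nonneg_of_mem_rowStochastic hQk
    rw [Matrix.mulVec_mulVec, ← pow_succ, Matrix.mulVec_sub, Matrix.mulVec_add,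
      Matrix.mulVec_smul, Matrix.one_vecMul_of_mem_rowStochastic hQk, Matrix.mulVec_single] at hmono
    simp only [Pi.sub_apply, Pi.add_apply, Pi.smul_apply, Pi.one_apply, smul_eq_mul, mul_one,
      MulOpposite.smul_eq_mul_unop, MulOpposite.unop_op, Matrix.col_apply] at hmono
    linarith
  have hpos : 0 ≤ ((Q ^ (t + 1)) *ᵥ F) a :=
    Matrix.nonneg_mulVec_of_mem_rowStochastic (pow_mem hQ _) hF a
  calc c * expectedVisits Q a t
      ≤ ∑ k ∈ range (t + 1), (((Q ^ k) *ᵥ F) a - ((Q ^ (k + 1)) *ᵥ F) a + τ) := by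
        rw [expectedVisits, mul_sum]
        exact sum_le_sum fun k _ => hstep k
    _ = F a - ((Q ^ (t + 1)) *ᵥ F) a + (t + 1) * τ := by
        rw [sum_add_distrib, sum_range_sub']
        simp
    _ ≤ F a + (t + 1) * τ := by linarith

/-- The Green potential of `S` for the transition matrix `P`, truncated at time `K`: the expected
number of visits to `S` before time `K`, as a function of the starting point. -/
def truncatedPotential (P : Matrix W W ℝ) (S : Finset W) (K : ℕ) : W → ℝ :=
  (∑ k ∈ range K, P ^ k) *ᵥ 𝟙 S

lemma truncatedPotential_eq_sum (P : Matrix W W ℝ) (S : Finset W) (K : ℕ) :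
    truncatedPotential P S K = ∑ k ∈ range K, (P ^ k) *ᵥ 𝟙 S := by
  rw [truncatedPotential, Matrix.sum_mulVec]

lemma mulVec_truncatedPotential (P : Matrix W W ℝ) (S : Finset W) (K : ℕ) :
    P *ᵥ truncatedPotential P S K = truncatedPotential P S K + (P ^ K) *ᵥ 𝟙 S - 𝟙 S := by
  rw [eq_sub_iff_add_eq]
  nth_rw 1 [← Matrix.one_mulVec (𝟙 S)]
  simp only [truncatedPotential, Matrix.mulVec_mulVec, ← Matrix.add_mulVec, ← geom_sum_succ,
    ← sum_range_succ]

lemma truncatedPotential_nonneg {P : Matrix W W ℝ} (hP : P ∈ Matrix.rowStochastic ℝ W)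
    (S : Finset W) (K : ℕ) : 0 ≤ truncatedPotential P S K := by
  rw [truncatedPotential_eq_sum]
  exact sum_nonneg fun k _ =>
    Matrix.nonneg_mulVec_of_mem_rowStochastic (pow_mem hP k) (indicatorVec_nonneg S)

lemma one_le_truncatedPotential {P : Matrix W W ℝ} (hP : P ∈ Matrix.rowStochastic ℝ W)
    {S : Finset W} {K : ℕ} (hK : 0 < K) {x : W} (hx : x ∈ S) :
    1 ≤ truncatedPotential P S K x := by
  have hle : (P ^ 0) *ᵥ 𝟙 S ≤ truncatedPotential P S K := by
    rw [truncatedPotential_eq_sum]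
    exact single_le_sum (f := fun k => (P ^ k) *ᵥ 𝟙 S) (fun k _ =>
      Matrix.nonneg_mulVec_of_mem_rowStochastic (pow_mem hP k) (indicatorVec_nonneg S))
      (mem_range.2 hK)
  simpa [indicatorVec, hx] using hle x

lemma mulVec_truncatedPotential_le {P : Matrix W W ℝ} {K : ℕ} {η : ℝ}
    (hη : ∀ x y, (P ^ K) x y ≤ η) {S : Finset W} {x : W} (hx : x ∉ S) :
    (P *ᵥ truncatedPotential P S K) x ≤ truncatedPotential P S K x + #S * η := by
  have := mulVec_indicatorVec_apply_le hη S x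
  simp only [mulVec_truncatedPotential, Pi.sub_apply, Pi.add_apply, indicatorVec, mem_coe, hx,
    not_false_eq_true, Set.indicator_of_notMem, sub_zero] at this ⊢
  linarith

lemma sum_mulVec_truncatedPotential (P : Matrix W W ℝ) (S : Finset W) (K : ℕ) :
    ∑ x ∈ S, (P *ᵥ truncatedPotential P S K) x
      = ∑ k ∈ range K, 𝟙 S ⬝ᵥ (P ^ (k + 1)) *ᵥ 𝟙 S := by
  simp only [← indicatorVec_dotProduct, truncatedPotential_eq_sum, Matrix.mulVec_sum,
    dotProduct_sum, Matrix.mulVec_mulVec, pow_succ']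

lemma one_add_posSemidef_of_mem_rowStochastic {P : Matrix W W ℝ} (hsymm : P.IsSymm)
    (hP : P ∈ Matrix.rowStochastic ℝ W) : (1 + P).PosSemidef := by
  have hherm : (1 + P).IsHermitian := by
    rw [Matrix.IsHermitian, Matrix.conjTranspose_eq_transpose_of_trivial, Matrix.transpose_add,
      Matrix.transpose_one, hsymm.eq]
  refine .of_dotProduct_mulVec_nonneg hherm fun x => ?_
  have hrow (u : W) : ∑ v, P u v * x u ^ 2 = x u ^ 2 := by
    rw [← sum_mul, Matrix.sum_row_of_mem_rowStochastic hP, one_mul]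
  have hcol (v : W) : ∑ u, P u v * x v ^ 2 = x v ^ 2 := by
    simpa only [hsymm.apply] using hrow v
  have hform : x ⬝ᵥ (1 + P) *ᵥ x = 2⁻¹ * ∑ u, ∑ v, P u v * (x u + x v) ^ 2 := by
    have hsplit (u v : W) : P u v * (x u + x v) ^ 2
        = P u v * x u ^ 2 + P u v * x v ^ 2 + 2 * (x u * (P u v * x v)) := by ring
    simp only [hsplit, sum_add_distrib, hrow, sum_comm (f := fun u v => P u v * x v ^ 2), hcol,
      ← mul_sum]
    rw [Matrix.add_mulVec, Matrix.one_mulVec, dotProduct_add]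
    simp only [dotProduct, Matrix.mulVec, sq]
    ring
  rw [star_trivial, hform]
  exact mul_nonneg (by norm_num) (sum_nonneg fun u _ => sum_nonneg fun v _ =>
    mul_nonneg (Matrix.nonneg_of_mem_rowStochastic hP) (sq_nonneg _))

section SpectralGap

variable {M : Matrix W W ℝ} {r : ℝ}

lemma one_dotProduct_mulVec_of_mem_rowStochastic (hsymm : M.IsSymm)
    (hM : M ∈ Matrix.rowStochastic ℝ W) (x : W → ℝ) : 1 ⬝ᵥ M *ᵥ x = 1 ⬝ᵥ x := by
  rw [dotProduct_mulVec_comm_of_isSymm hsymm, Matrix.one_vecMul_of_mem_rowStochastic hM]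

lemma dotProduct_pow_mulVec_self_le_of_gap (hpsd : M.PosSemidef)
    (hM : M ∈ Matrix.rowStochastic ℝ W) (hr : 0 ≤ r)
    (hgap : ∀ x : W → ℝ, 1 ⬝ᵥ x = 0 → x ⬝ᵥ M *ᵥ x ≤ r * (x ⬝ᵥ x)) {x : W → ℝ}
    (hx : 1 ⬝ᵥ x = 0) (t : ℕ) :
    (M ^ t) *ᵥ x ⬝ᵥ (M ^ t) *ᵥ x ≤ (r ^ t) ^ 2 * (x ⬝ᵥ x) := by
  have hsymm : M.IsSymm := hpsd.isHermitian
  induction t with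
  | zero => simp
  | succ t ih =>
    have hxt : 1 ⬝ᵥ (M ^ t) *ᵥ x = 0 :=
      (one_dotProduct_mulVec_of_mem_rowStochastic (hsymm.pow t) (pow_mem hM t) x).trans hx
    have hMxt := (one_dotProduct_mulVec_of_mem_rowStochastic hsymm hM _).trans hxt
    rw [pow_succ', ← Matrix.mulVec_mulVec]
    calc M *ᵥ (M ^ t) *ᵥ x ⬝ᵥ M *ᵥ (M ^ t) *ᵥ x
        ≤ r ^ 2 * ((M ^ t) *ᵥ x ⬝ᵥ (M ^ t) *ᵥ x) :=
          dotProduct_mulVec_self_le_of_posSemidef hpsd hr (hgap _ hxt) (hgap _ hMxt)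
      _ ≤ r ^ 2 * ((r ^ t) ^ 2 * (x ⬝ᵥ x)) := by gcongr
      _ = (r ^ (t + 1)) ^ 2 * (x ⬝ᵥ x) := by ring

lemma abs_pow_apply_sub_inv_card_le_of_gap (hpsd : M.PosSemidef)
    (hM : M ∈ Matrix.rowStochastic ℝ W) (hr : 0 ≤ r)
    (hgap : ∀ x : W → ℝ, 1 ⬝ᵥ x = 0 → x ⬝ᵥ M *ᵥ x ≤ r * (x ⬝ᵥ x)) (t : ℕ) (x y : W) :
    |(M ^ t) x y - (Fintype.card W : ℝ)⁻¹| ≤ r ^ t := by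
  have hN : (Fintype.card W : ℝ) ≠ 0 := mod_cast (Fintype.card_pos_iff.2 ⟨x⟩).ne'
  set z : W → ℝ := Pi.single y 1 - (Fintype.card W : ℝ)⁻¹ • 1
  have hz : 1 ⬝ᵥ z = 0 := by
    simp [z, dotProduct_sub, hN]
  have hzz : z ⬝ᵥ z ≤ 1 := by
    have : z ⬝ᵥ z = z y - (Fintype.card W : ℝ)⁻¹ * (1 ⬝ᵥ z) := by
      conv_lhs => enter [1]; simp only [z]
      rw [sub_dotProduct, single_dotProduct, one_mul, smul_dotProduct, smul_eq_mul]
    rw [this, hz]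
    simp [z]
  have hentry : ((M ^ t) *ᵥ z) x = (M ^ t) x y - (Fintype.card W : ℝ)⁻¹ := by
    simp [z, Matrix.mulVec_sub, Matrix.mulVec_smul,
      Matrix.one_vecMul_of_mem_rowStochastic (pow_mem hM t)]
  rw [← hentry]
  refine abs_le_of_sq_le_sq ?_ (by positivity)
  calc ((M ^ t) *ᵥ z) x ^ 2 ≤ ((M ^ t) *ᵥ z) ⬝ᵥ ((M ^ t) *ᵥ z) := by
        rw [sq]
        exact single_le_sum (f := fun v => ((M ^ t) *ᵥ z) v * ((M ^ t) *ᵥ z) v)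
          (fun v _ => mul_self_nonneg _) (mem_univ x)
    _ ≤ (r ^ t) ^ 2 * (z ⬝ᵥ z) := dotProduct_pow_mulVec_self_le_of_gap hpsd hM hr hgap hz t
    _ ≤ (r ^ t) ^ 2 := mul_le_of_le_one_right (by positivity) hzz

end SpectralGap

end Matrices

section Walk

variable {W : Type*} {G : SimpleGraph W} {d : ℕ}

lemma simpleStep_eq_smul_adjMatrix (G : SimpleGraph W) (d : ℕ) :
    simpleStep G d = (d : ℝ)⁻¹ • G.adjMatrix ℝ := by
  ext x y
  simp [simpleStep, SimpleGraph.adjMatrix_apply]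

lemma simpleStep_isSymm (G : SimpleGraph W) (d : ℕ) : (simpleStep G d).IsSymm := by
  rw [simpleStep_eq_smul_adjMatrix]
  exact G.isSymm_adjMatrix.smul _

lemma simpleStep_nonneg (G : SimpleGraph W) (d : ℕ) (x y : W) : 0 ≤ simpleStep G d x y := by
  simp only [simpleStep, Matrix.of_apply]
  positivity

lemma lazyStep_eq_smul_one_add [DecidableEq W] (G : SimpleGraph W) (d : ℕ) :
    lazyStep G d = (2 : ℝ)⁻¹ • (1 + simpleStep G d) := by
  ext x y
  simp [lazyStep, simpleStep, Matrix.one_apply, mul_add]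

variable [Fintype W]

lemma simpleStep_mulVec_apply (G : SimpleGraph W) (d : ℕ) (f : W → ℝ) (x : W) :
    (simpleStep G d *ᵥ f) x = (d : ℝ)⁻¹ * ∑ y ∈ G.neighborFinset x, f y := by
  rw [simpleStep_eq_smul_adjMatrix, Matrix.smul_mulVec, Pi.smul_apply, smul_eq_mul,
    SimpleGraph.adjMatrix_mulVec_apply]

-- The neighbours of `x` not farther from `u` than `x` number at most `ρ * dist x u` by `PropP3`
-- and cost a factor `θ⁻¹`; each of the others gains a factor `θ`.
lemma mul_simpleStep_mulVec_pow_dist_le (hreg : G.IsRegularOfDegree d) (hd : 0 < d) {ε ρ θ : ℝ}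
    (hP3 : PropP3 G d ε ρ) (hθ : 0 ≤ θ) (hθ1 : θ ≤ 1) {x u : W}
    (hx : (G.dist x u : ℝ) ≤ (d : ℝ) ^ ε) :
    θ * (simpleStep G d *ᵥ fun y => θ ^ G.dist y u) x
      ≤ (ρ * G.dist x u / d + θ ^ 2) * θ ^ G.dist x u := by
  set k := G.dist x u with hk
  have hnear : (#{y ∈ G.neighborFinset x | G.dist y u ≤ k} : ℝ) ≤ ρ * k := by
    have h := hP3 u x (by rwa [G.dist_comm])
    rw [G.dist_comm, ← hk, ← filter_filter, ← G.neighborFinset_eq_filter] at h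
    exact h
  have hterm : ∀ y ∈ G.neighborFinset x,
      θ * θ ^ G.dist y u ≤ (if G.dist y u ≤ k then θ ^ k else 0) + θ ^ 2 * θ ^ k := by
    intro y hy
    have hdist := ((G.mem_neighborFinset x y).1 hy).diff_dist_adj (u := u)
    rw [G.dist_comm (u := u) (v := x), G.dist_comm (u := u) (v := y)] at hdist
    rw [← pow_succ', ← pow_add]
    split_ifs with hyk
    · exact (pow_le_pow_of_le_one hθ hθ1 (by omega)).trans (le_add_of_nonneg_right (by positivity))
    · rw [zero_add]
      exact pow_le_pow_of_le_one hθ hθ1 (by omega)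
  have hd' : (d : ℝ) ≠ 0 := mod_cast hd.ne'
  calc θ * (simpleStep G d *ᵥ fun y => θ ^ G.dist y u) x
      = (d : ℝ)⁻¹ * ∑ y ∈ G.neighborFinset x, θ * θ ^ G.dist y u := by
        rw [simpleStep_mulVec_apply, mul_left_comm, mul_sum]
    _ ≤ (d : ℝ)⁻¹ * ∑ y ∈ G.neighborFinset x,
          ((if G.dist y u ≤ k then θ ^ k else 0) + θ ^ 2 * θ ^ k) := by
        gcongr with y hy
        exact hterm y hy
    _ = (d : ℝ)⁻¹ * (#{y ∈ G.neighborFinset x | G.dist y u ≤ k} * θ ^ k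
          + d * (θ ^ 2 * θ ^ k)) := by
        rw [sum_add_distrib, ← sum_filter, sum_const, sum_const, nsmul_eq_mul, nsmul_eq_mul,
          G.card_neighborFinset_eq_degree, hreg.degree_eq x]
    _ ≤ (d : ℝ)⁻¹ * (ρ * k * θ ^ k + d * (θ ^ 2 * θ ^ k)) := by gcongr
    _ = (ρ * k / d + θ ^ 2) * θ ^ k := by
        rw [mul_add, inv_mul_cancel_left₀ hd']
        ring

variable [DecidableEq W]

lemma lazyStep_mulVec_apply (G : SimpleGraph W) (d : ℕ) (f : W → ℝ) (x : W) :
    (lazyStep G d *ᵥ f) x = 2⁻¹ * (f x + (simpleStep G d *ᵥ f) x) := by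
  simp [lazyStep_eq_smul_one_add, Matrix.smul_mulVec, Matrix.add_mulVec, mul_add]

lemma simpleStep_mem_rowStochastic (hreg : G.IsRegularOfDegree d) (hd : 0 < d) :
    simpleStep G d ∈ Matrix.rowStochastic ℝ W := by
  refine Matrix.mem_rowStochastic.2 ⟨simpleStep_nonneg G d, funext fun x => ?_⟩
  have hd' : (d : ℝ) ≠ 0 := mod_cast hd.ne'
  simp [simpleStep_mulVec_apply, hreg.degree_eq x, hd']

lemma lazyStep_mem_rowStochastic (hreg : G.IsRegularOfDegree d) (hd : 0 < d) :
    lazyStep G d ∈ Matrix.rowStochastic ℝ W := by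
  have h := Matrix.convex_rowStochastic (one_mem (Matrix.rowStochastic ℝ W))
    (simpleStep_mem_rowStochastic hreg hd) (a := 2⁻¹) (b := 2⁻¹) (by norm_num) (by norm_num)
    (by norm_num)
  rwa [← smul_add, ← lazyStep_eq_smul_one_add] at h

lemma lazyStep_posSemidef (hreg : G.IsRegularOfDegree d) (hd : 0 < d) :
    (lazyStep G d).PosSemidef := by
  rw [lazyStep_eq_smul_one_add]
  exact (one_add_posSemidef_of_mem_rowStochastic (simpleStep_isSymm G d)
    (simpleStep_mem_rowStochastic hreg hd)).smul (by norm_num)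

lemma simpleStep_pow_apply_eq_zero_of_lt_dist {k : ℕ} {x u : W} (hk : k < G.dist x u) :
    ((simpleStep G d) ^ k) x u = 0 := by
  have : IsEmpty {p : G.Walk x u | p.length = k} :=
    ⟨fun p => ((SimpleGraph.dist_le p.1).trans_eq p.2).not_gt hk⟩
  rw [simpleStep_eq_smul_adjMatrix, smul_pow, Matrix.smul_apply,
    SimpleGraph.adjMatrix_pow_apply_eq_card_walk, Fintype.card_eq_zero, Nat.cast_zero, smul_zero]

lemma simpleStep_pow_apply_le (hreg : G.IsRegularOfDegree d) (hd : 0 < d) {K : ℕ} {ε ρ θ β : ℝ}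
    (hP3 : PropP3 G d ε ρ) (hρ : 0 ≤ ρ) (hK : (K : ℝ) ≤ (d : ℝ) ^ ε) (hθ : 0 < θ) (hθ1 : θ ≤ 1)
    (hβ : ρ * K / d + θ ^ 2 ≤ θ * β) {k : ℕ} (hk : k ≤ K) (x u : W) :
    ((simpleStep G d) ^ k) x u ≤ β ^ k * θ ^ G.dist x u := by
  have hβ0 : 0 ≤ β := nonneg_of_mul_nonneg_right ((by positivity : (0:ℝ) ≤ _).trans hβ) hθ
  induction k generalizing x with
  | zero =>
    rcases eq_or_ne x u with rfl | h
    · simp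
    · rw [pow_zero, Matrix.one_apply_ne h]
      positivity
  | succ k ih =>
    rcases le_or_gt (G.dist x u) K with hx | hx
    · have hx' : (G.dist x u : ℝ) ≤ K := mod_cast hx
      have hstep : (simpleStep G d *ᵥ fun y => θ ^ G.dist y u) x ≤ β * θ ^ G.dist x u := by
        refine le_of_mul_le_mul_left ?_ hθ
        calc _ ≤ (ρ * G.dist x u / d + θ ^ 2) * θ ^ G.dist x u :=
              mul_simpleStep_mulVec_pow_dist_le hreg hd hP3 hθ.le hθ1 (hx'.trans hK)
          _ ≤ (ρ * K / d + θ ^ 2) * θ ^ G.dist x u := by gcongr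
          _ ≤ θ * β * θ ^ G.dist x u := by gcongr
          _ = θ * (β * θ ^ G.dist x u) := mul_assoc ..
      calc ((simpleStep G d) ^ (k + 1)) x u
          = ∑ y, simpleStep G d x y * ((simpleStep G d) ^ k) y u := by
            rw [pow_succ', Matrix.mul_apply]
        _ ≤ ∑ y, simpleStep G d x y * (β ^ k * θ ^ G.dist y u) := by
            gcongr with y
            · exact simpleStep_nonneg G d x y
            · exact ih (by omega) y
        _ = β ^ k * (simpleStep G d *ᵥ fun y => θ ^ G.dist y u) x := by
            rw [Matrix.mulVec, dotProduct, mul_sum]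
            exact sum_congr rfl fun y _ => mul_left_comm ..
        _ ≤ β ^ k * (β * θ ^ G.dist x u) := by gcongr
        _ = β ^ (k + 1) * θ ^ G.dist x u := by ring
    · rw [simpleStep_pow_apply_eq_zero_of_lt_dist (hk.trans_lt hx)]
      positivity

end Walk

section Contraction

variable {W : Type*}

/-- The map onto the vertices of the contracted multigraph that sends `S` to `γ_S`. Composing with
it turns a function on the contracted multigraph into one that is constant on `S`. -/
def contractMap (S : Finset W) (x : W) : {x : W // x ∉ S} ⊕ Unit :=
  if h : x ∈ S then Sum.inr () else Sum.inl ⟨x, h⟩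

lemma contractMap_of_mem {S : Finset W} {x : W} (h : x ∈ S) : contractMap S x = Sum.inr () :=
  dif_pos h

lemma contractMap_coe {S : Finset W} (x : {x : W // x ∉ S}) : contractMap S x = Sum.inl x :=
  dif_neg x.2

lemma sumElim_one_comp_contractMap {S : Finset W} {f : W → ℝ} (hf : ∀ x ∈ S, f x = 1) :
    Sum.elim (fun x : {x : W // x ∉ S} => f x) 1 ∘ contractMap S = f := by
  ext x
  by_cases hx : x ∈ S
  · simp [contractMap_of_mem hx, hf x hx]
  · simp [contractMap, hx]

lemma sum_comp_contractMap (S : Finset W) (F : {x : W // x ∉ S} ⊕ Unit → ℝ) :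
    ∑ x ∈ S, (F ∘ contractMap S) x = #S * F (Sum.inr ()) := by
  rw [← nsmul_eq_mul, ← sum_const]
  exact sum_congr rfl fun x hx => by rw [Function.comp_apply, contractMap_of_mem hx]

lemma two_mul_edgesInside (G : SimpleGraph W) (S : Finset W) :
    2 * edgesInside G S = ∑ y ∈ S, #{x ∈ S | G.Adj x y} := by
  have heven : Even #{p ∈ S ×ˢ S | G.Adj p.1 p.2} := by
    rw [← ZMod.natCast_eq_zero_iff_even, card_eq_sum_ones, Nat.cast_sum]
    refine sum_involution (fun p _ => p.swap) (fun _ _ => by decide) (fun p hp _ hpp => ?_)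
      (fun p hp => ?_) (fun p _ => p.swap_swap)
    · exact (mem_filter.1 hp).2.ne (congrArg Prod.snd hpp)
    · simpa [and_comm, G.adj_comm] using hp
  rw [edgesInside, Nat.two_mul_div_two_of_even heven]
  simp only [card_filter, sum_product_right]

lemma two_inv_le_contractedLazy_inr_inr [DecidableEq W] (G : SimpleGraph W) (d : ℕ) (S : Finset W) :
    (2 : ℝ)⁻¹ ≤ contractedLazy G d S (Sum.inr ()) (Sum.inr ()) := by
  simp only [contractedLazy, Matrix.of_apply]
  exact le_add_of_nonneg_right (by positivity)

variable [Fintype W] [DecidableEq W]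

lemma sum_eq_sum_notMem_add_sum (S : Finset W) (f : W → ℝ) :
    ∑ y, f y = ∑ y : {x : W // x ∉ S}, f y + ∑ y ∈ S, f y := by
  rw [← sum_compl_add_sum S f, ← sum_subtype Sᶜ (by simp) f]

lemma contractedLazy_mulVec_inl (G : SimpleGraph W) (d : ℕ) (S : Finset W)
    (F : {x : W // x ∉ S} ⊕ Unit → ℝ) (x : {x : W // x ∉ S}) :
    (contractedLazy G d S *ᵥ F) (Sum.inl x) = (lazyStep G d *ᵥ (F ∘ contractMap S)) x := by
  simp only [Matrix.mulVec, dotProduct]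
  rw [Fintype.sum_sum_type, sum_eq_sum_notMem_add_sum S]
  congr 1
  · simp [contractedLazy, contractMap_coe]
  · have hterm : ∀ y ∈ S, lazyStep G d x y * (F ∘ contractMap S) y
        = (if G.Adj x y then 1 else 0) * ((2 * (d : ℝ))⁻¹ * F (Sum.inr ())) := fun y hy => by
      have hxy : (x : W) ≠ y := fun h => x.2 (h ▸ hy)
      simp [lazyStep, hxy, contractMap_of_mem hy, mul_comm]
    rw [sum_congr rfl hterm, ← sum_mul, sum_boole]
    simp [contractedLazy, div_eq_mul_inv, mul_assoc]

lemma sum_simpleStep_mulVec_comp_contractMap (G : SimpleGraph W) (d : ℕ) (S : Finset W)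
    (F : {x : W // x ∉ S} ⊕ Unit → ℝ) :
    ∑ x ∈ S, (simpleStep G d *ᵥ (F ∘ contractMap S)) x
      = ∑ y : {x : W // x ∉ S}, #{x ∈ S | G.Adj x y} / (d : ℝ) * F (Sum.inl y)
        + 2 * edgesInside G S / (d : ℝ) * F (Sum.inr ()) := by
  have hcol : ∀ y, (simpleStep G d *ᵥ 𝟙 S) y = #{x ∈ S | G.Adj x y} / (d : ℝ) := fun y => by
    rw [mulVec_indicatorVec_apply, card_filter, Nat.cast_sum, sum_div]
    exact sum_congr rfl fun x _ => by simp [simpleStep, G.adj_comm x y, ite_div]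
  have hinside : ∑ y ∈ S, (simpleStep G d *ᵥ 𝟙 S) y * (F ∘ contractMap S) y
      = 2 * edgesInside G S / (d : ℝ) * F (Sum.inr ()) := by
    have hedges : (2 * edgesInside G S : ℝ) = ∑ y ∈ S, (#{x ∈ S | G.Adj x y} : ℝ) :=
      mod_cast two_mul_edgesInside G S
    rw [hedges, sum_div, sum_mul]
    exact sum_congr rfl fun y hy => by rw [hcol, Function.comp_apply, contractMap_of_mem hy]
  rw [← indicatorVec_dotProduct, dotProduct_mulVec_comm_of_isSymm (simpleStep_isSymm G d),
    dotProduct, sum_eq_sum_notMem_add_sum S, hinside]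
  simp only [hcol, Function.comp_apply, contractMap_coe]

lemma card_mul_contractedLazy_mulVec_inr (G : SimpleGraph W) (d : ℕ) (S : Finset W)
    (F : {x : W // x ∉ S} ⊕ Unit → ℝ) :
    #S * (contractedLazy G d S *ᵥ F) (Sum.inr ())
      = ∑ x ∈ S, (lazyStep G d *ᵥ (F ∘ contractMap S)) x := by
  rcases S.eq_empty_or_nonempty with rfl | hS
  · simp
  have hS' : (#S : ℝ) ≠ 0 := mod_cast hS.card_ne_zero
  calc #S * (contractedLazy G d S *ᵥ F) (Sum.inr ())
      = ∑ y : {x : W // x ∉ S}, #S * (#{x ∈ S | G.Adj x y} / (2 * (d * #S)) * F (Sum.inl y))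
        + #S * ((2⁻¹ + edgesInside G S / (d * #S)) * F (Sum.inr ())) := by
        rw [← mul_sum, ← mul_add]
        simp [Matrix.mulVec, dotProduct, contractedLazy]
    _ = ∑ y : {x : W // x ∉ S}, 2⁻¹ * (#{x ∈ S | G.Adj x y} / (d : ℝ) * F (Sum.inl y))
        + 2⁻¹ * (#S * F (Sum.inr ()) + 2 * edgesInside G S / (d : ℝ) * F (Sum.inr ())) := by
        congr 1
        · exact sum_congr rfl fun y _ => by field_simp
        · field_simp
    _ = ∑ x ∈ S, (lazyStep G d *ᵥ (F ∘ contractMap S)) x := by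
        simp only [lazyStep_mulVec_apply]
        rw [← mul_sum, ← mul_sum, sum_add_distrib, sum_comp_contractMap,
          sum_simpleStep_mulVec_comp_contractMap]
        ring

lemma contractedLazy_mem_rowStochastic {G : SimpleGraph W} {d : ℕ} (hreg : G.IsRegularOfDegree d)
    (hd : 0 < d) {S : Finset W} (hS : S.Nonempty) :
    contractedLazy G d S ∈ Matrix.rowStochastic ℝ ({x : W // x ∉ S} ⊕ Unit) := by
  have hM := lazyStep_mem_rowStochastic hreg hd
  refine Matrix.mem_rowStochastic.2 ⟨?_, funext ?_⟩
  · rintro (x | x) (y | y) <;> simp only [contractedLazy, Matrix.of_apply]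
    · exact (Matrix.mem_rowStochastic.1 hM).1 x y
    all_goals positivity
  · have hone : lazyStep G d *ᵥ ((1 : {x : W // x ∉ S} ⊕ Unit → ℝ) ∘ contractMap S) = 1 :=
      (Matrix.mem_rowStochastic.1 hM).2
    rintro (x | _)
    · rw [contractedLazy_mulVec_inl, hone, Pi.one_apply, Pi.one_apply]
    · have hS' : (#S : ℝ) ≠ 0 := mod_cast hS.card_ne_zero
      refine mul_left_cancel₀ hS' ?_
      rw [card_mul_contractedLazy_mulVec_inr, hone]
      simp

lemma contractedLazy_mulVec_le {G : SimpleGraph W} {d : ℕ} {S : Finset W} (hS : S.Nonempty)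
    {F : {x : W // x ∉ S} ⊕ Unit → ℝ} {τ κ : ℝ} (hτ : 0 ≤ τ)
    (hout : ∀ x : {x : W // x ∉ S},
      (simpleStep G d *ᵥ (F ∘ contractMap S)) x ≤ F (Sum.inl x) + τ)
    (hin : ∑ x ∈ S, (simpleStep G d *ᵥ (F ∘ contractMap S)) x
      ≤ #S * (F (Sum.inr ()) - 2 * κ)) :
    contractedLazy G d S *ᵥ F ≤ F + τ • 1 - Pi.single (Sum.inr ()) κ := by
  rintro (x | _)
  · have := hout x
    simp only [contractedLazy_mulVec_inl, lazyStep_mulVec_apply, Function.comp_apply,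
      contractMap_coe, Pi.sub_apply, Pi.add_apply, Pi.smul_apply, Pi.one_apply, smul_eq_mul,
      mul_one, Pi.single_apply, reduceCtorEq, if_false, sub_zero] at this ⊢
    linarith
  · have hcard : (0 : ℝ) < #S := mod_cast hS.card_pos
    refine le_of_mul_le_mul_left ?_ hcard
    calc #S * (contractedLazy G d S *ᵥ F) (Sum.inr ())
        = 2⁻¹ * (#S * F (Sum.inr ())
            + ∑ x ∈ S, (simpleStep G d *ᵥ (F ∘ contractMap S)) x) := by
          simp only [card_mul_contractedLazy_mulVec_inr, lazyStep_mulVec_apply]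
          rw [← mul_sum, sum_add_distrib, sum_comp_contractMap]
      _ ≤ #S * (F (Sum.inr ()) + τ - κ) := by nlinarith
      _ = _ := by simp

lemma mul_expectedVisits_contractedLazy_le {G : SimpleGraph W} {d : ℕ}
    (hreg : G.IsRegularOfDegree d) (hd : 0 < d) {S : Finset W} (hS : S.Nonempty) {K : ℕ}
    (hK : 0 < K) {β E : ℝ} (hβ : 0 ≤ β) (hE : 1 ≤ E)
    (hPβ : ∀ k ≤ K, ∀ x y, ((simpleStep G d) ^ k) x y ≤ β ^ k) (hSE : (#S : ℝ) ≤ E ^ K)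
    (hEβ : E ^ 2 * β ≤ 1 / 2) (t : ℕ) :
    (2⁻¹ - E ^ 2 * β) * expectedVisits (contractedLazy G d S) (Sum.inr ()) t
      ≤ 1 + (t + 1) * (#S * β ^ K) := by
  have hP := simpleStep_mem_rowStochastic hreg hd
  set P := simpleStep G d
  set g := truncatedPotential P S K
  have hmono : ∀ {f₁ f₂ : W → ℝ}, f₁ ≤ f₂ → P *ᵥ f₁ ≤ P *ᵥ f₂ := fun h x =>
    dotProduct_le_dotProduct_of_nonneg_left h fun _ => Matrix.nonneg_of_mem_rowStochastic hP
  set F : {x : W // x ∉ S} ⊕ Unit → ℝ := Sum.elim (fun x => (1 ⊓ g) x) 1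
  have hF : F ∘ contractMap S = 1 ⊓ g := sumElim_one_comp_contractMap fun x hx =>
    inf_of_le_left (one_le_truncatedPotential hP hK hx)
  have hF0 : ∀ x, 0 ≤ F x := Sum.rec
    (fun x => le_min zero_le_one (truncatedPotential_nonneg hP S K x)) fun _ => zero_le_one
  have hτ : 0 ≤ #S * β ^ K := by positivity
  have hout (x : {x : W // x ∉ S}) : (P *ᵥ (F ∘ contractMap S)) x ≤ F (Sum.inl x) + #S * β ^ K := by
    have hPone : (P *ᵥ (1 ⊓ g)) x ≤ 1 :=
      (hmono inf_le_left x).trans_eq (congrFun (Matrix.mem_rowStochastic.1 hP).2 x)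
    rw [hF]
    change _ ≤ min 1 (g x) + _
    rw [← min_add_add_right]
    exact le_min (hPone.trans (le_add_of_nonneg_right hτ))
      ((hmono inf_le_right x).trans (mulVec_truncatedPotential_le (hPβ K le_rfl) x.2))
  have hin : ∑ x ∈ S, (P *ᵥ (F ∘ contractMap S)) x ≤ #S * (1 - 2 * (2⁻¹ - E ^ 2 * β)) :=
    calc ∑ x ∈ S, (P *ᵥ (F ∘ contractMap S)) x ≤ ∑ x ∈ S, (P *ᵥ g) x :=
          sum_le_sum fun x _ => hF ▸ hmono inf_le_right x
      _ ≤ #S * (2 * (E ^ 2 * β)) := by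
          rw [sum_mulVec_truncatedPotential]
          exact sum_indicatorVec_dotProduct_pow_mulVec_le (simpleStep_isSymm G d)
            (simpleStep_nonneg G d) hS hβ hE hPβ hSE hEβ
      _ = #S * (1 - 2 * (2⁻¹ - E ^ 2 * β)) := by ring
  exact mul_expectedVisits_le (contractedLazy_mem_rowStochastic hreg hd hS) hF0
    (contractedLazy_mulVec_le hS hτ hout hin) t

end Contraction

section MixingTime

variable {W : Type*} [Fintype W] [DecidableEq W] {G : SimpleGraph W} {d : ℕ} {γ : ℝ}

lemma abs_lazyStep_pow_apply_sub_inv_card_le (hreg : G.IsRegularOfDegree d) (hd : 0 < d)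
    (hgap : SpectralGapLB G d γ) (t : ℕ) (x y : W) :
    |((lazyStep G d) ^ t) x y - (Fintype.card W : ℝ)⁻¹| ≤ Real.exp (-γ) ^ t := by
  refine abs_pow_apply_sub_inv_card_le_of_gap (lazyStep_posSemidef hreg hd)
    (lazyStep_mem_rowStochastic hreg hd) (Real.exp_nonneg _) (fun z hz => ?_) t x y
  have hsum : ∑ u, ∑ v, z u * lazyStep G d u v * z v = z ⬝ᵥ lazyStep G d *ᵥ z := by
    simp only [dotProduct, Matrix.mulVec, mul_sum, mul_assoc]
  have hsq : ∑ v, z v ^ 2 = z ⬝ᵥ z := sum_congr rfl fun v _ => sq (z v)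
  have hz' := hgap z (by rwa [one_dotProduct] at hz)
  rw [hsum, hsq] at hz'
  refine hz'.trans (mul_le_mul_of_nonneg_right ?_ (by simpa using dotProduct_star_self_nonneg z))
  linarith [Real.add_one_le_exp (-γ)]

lemma abs_lazyStep_pow_apply_sub_inv_card_le_inv_card_pow_three (hreg : G.IsRegularOfDegree d)
    (hd : 0 < d) (hγ : 0 < γ) (hgap : SpectralGapLB G d γ) {t : ℕ}
    (ht : 3 * Real.log (Fintype.card W) / γ ≤ t) (x y : W) :
    |((lazyStep G d) ^ t) x y - (Fintype.card W : ℝ)⁻¹| ≤ ((Fintype.card W : ℝ) ^ 3)⁻¹ := by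
  have hN : 0 < (Fintype.card W : ℝ) := mod_cast Fintype.card_pos_iff.2 ⟨x⟩
  rw [div_le_iff₀ hγ] at ht
  calc _ ≤ Real.exp (-γ) ^ t := abs_lazyStep_pow_apply_sub_inv_card_le hreg hd hgap t x y
    _ = Real.exp (-(t * γ)) := by rw [← Real.exp_nat_mul, mul_neg]
    _ ≤ Real.exp (-(3 * Real.log (Fintype.card W))) := by gcongr
    _ = ((Fintype.card W : ℝ) ^ 3)⁻¹ := by
      rw [Real.exp_neg, mul_comm, Real.exp_mul, Real.exp_log hN]
      norm_cast

lemma mixingTime_le (hreg : G.IsRegularOfDegree d) (hd : 0 < d) (hγ : 0 < γ)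
    (hgap : SpectralGapLB G d γ) :
    (mixingTime G d : ℝ) ≤ 3 * Real.log (Fintype.card W) / γ + 1 := by
  set s := 3 * Real.log (Fintype.card W) / γ
  have hs : 0 ≤ s := by
    have := Real.log_natCast_nonneg (Fintype.card W)
    positivity
  have hle : mixingTime G d ≤ ⌊s⌋₊ + 1 := Nat.sInf_le ⟨by omega, fun x y =>
    abs_lazyStep_pow_apply_sub_inv_card_le_inv_card_pow_three hreg hd hγ hgap
      (by exact_mod_cast (Nat.lt_floor_add_one s).le) x y⟩
  calc (mixingTime G d : ℝ) ≤ ⌊s⌋₊ + 1 := mod_cast hle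
    _ ≤ s + 1 := by gcongr; exact Nat.floor_le hs

lemma two_inv_pow_mixingTime_le [Nonempty W] (hreg : G.IsRegularOfDegree d) (hd : 0 < d)
    (hγ : 0 < γ) (hgap : SpectralGapLB G d γ) :
    (2 : ℝ)⁻¹ ^ mixingTime G d ≤ 2 / Fintype.card W := by
  obtain ⟨x⟩ := ‹Nonempty W›
  set s := 3 * Real.log (Fintype.card W) / γ
  have hmixed : |((lazyStep G d) ^ mixingTime G d) x x - (Fintype.card W : ℝ)⁻¹|
      ≤ ((Fintype.card W : ℝ) ^ 3)⁻¹ :=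
    (Nat.sInf_mem (s := {t | 1 ≤ t ∧ ∀ x y, |((lazyStep G d) ^ t) x y - (Fintype.card W : ℝ)⁻¹|
        ≤ ((Fintype.card W : ℝ) ^ 3)⁻¹}) ⟨⌊s⌋₊ + 1, by omega, fun x y =>
      abs_lazyStep_pow_apply_sub_inv_card_le_inv_card_pow_three hreg hd hγ hgap
        (by exact_mod_cast (Nat.lt_floor_add_one s).le) x y⟩).2 x x
  have hN : 1 ≤ (Fintype.card W : ℝ) := mod_cast Fintype.card_pos_iff.2 ⟨x⟩
  calc (2 : ℝ)⁻¹ ^ mixingTime G d ≤ ((lazyStep G d) ^ mixingTime G d) x x :=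
        pow_le_pow_apply_self (Matrix.mem_rowStochastic.1 (lazyStep_mem_rowStochastic hreg hd)).1
          (by norm_num) (by simp [lazyStep]) _
    _ ≤ (Fintype.card W : ℝ)⁻¹ + ((Fintype.card W : ℝ) ^ 3)⁻¹ := by
        linarith [(abs_le.1 hmixed).2]
    _ ≤ (Fintype.card W : ℝ)⁻¹ + (Fintype.card W : ℝ)⁻¹ := by
        gcongr
        exact le_self_pow₀ hN (by norm_num)
    _ = 2 / Fintype.card W := by ring

end MixingTime

section FixedGraph

variable {W : Type*} [Fintype W] [DecidableEq W] {G : SimpleGraph W} {d : ℕ}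

lemma simpleStep_pow_apply_le_pow (hreg : G.IsRegularOfDegree d) (hd : 0 < d) {K : ℕ} {ε ρ : ℝ}
    (hP3 : PropP3 G d ε ρ) (hρ : 0 ≤ ρ) (hK : (K : ℝ) ≤ (d : ℝ) ^ ε)
    (hKsqrt : (K : ℝ) ≤ (d : ℝ) ^ (1 / 2 : ℝ)) {k : ℕ} (hk : k ≤ K) (x y : W) :
    ((simpleStep G d) ^ k) x y ≤ ((1 + ρ) * (d : ℝ) ^ (-1 / 4 : ℝ)) ^ k := by
  have hd0 : (0 : ℝ) < d := mod_cast hd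
  have hd1 : (1 : ℝ) ≤ d := mod_cast hd
  set θ := (d : ℝ) ^ (-1 / 4 : ℝ) with hθ
  have hθ0 : 0 < θ := by positivity
  have hθ1 : θ ≤ 1 := Real.rpow_le_one_of_one_le_of_nonpos hd1 (by norm_num)
  have hKd : (K : ℝ) / d ≤ θ ^ 2 :=
    calc (K : ℝ) / d ≤ (d : ℝ) ^ (1 / 2 : ℝ) / d := by gcongr
      _ = θ ^ 2 := by
        rw [← Real.rpow_sub_one hd0.ne', hθ, ← Real.rpow_mul_natCast hd0.le]
        norm_num
  have hβ : ρ * K / d + θ ^ 2 ≤ θ * ((1 + ρ) * θ) :=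
    calc ρ * K / d + θ ^ 2 = ρ * (K / d) + θ ^ 2 := by rw [mul_div_assoc]
      _ ≤ ρ * θ ^ 2 + θ ^ 2 := by gcongr
      _ = θ * ((1 + ρ) * θ) := by ring
  calc ((simpleStep G d) ^ k) x y ≤ ((1 + ρ) * θ) ^ k * θ ^ G.dist x y :=
        simpleStep_pow_apply_le hreg hd hP3 hρ hK hθ0 hθ1 hβ hk x y
    _ ≤ ((1 + ρ) * θ) ^ k := mul_le_of_le_one_right (by positivity) (pow_le_one₀ hθ0.le hθ1)

lemma mixingTime_add_one_le (hreg : G.IsRegularOfDegree d) (hd : 0 < d) {c ρ₁ : ℝ} (hc : 0 < c)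
    (hgap : SpectralGapLB G d (c / (d : ℝ) ^ ρ₁)) {m : ℕ} (hm : ρ₁ ≤ m)
    (hlog : 1 ≤ Real.log (Fintype.card W)) :
    (mixingTime G d : ℝ) + 1 ≤ (3 / c + 2) * (d : ℝ) ^ m * Real.log (Fintype.card W) := by
  have hd1 : (1 : ℝ) ≤ d := mod_cast hd
  have hdpow : (d : ℝ) ^ ρ₁ ≤ (d : ℝ) ^ m := by
    rw [← Real.rpow_natCast]
    exact Real.rpow_le_rpow_of_exponent_le hd1 hm
  set L := Real.log (Fintype.card W)
  calc (mixingTime G d : ℝ) + 1 ≤ 3 * L / (c / (d : ℝ) ^ ρ₁) + 1 + 1 := by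
        gcongr
        exact mixingTime_le hreg hd (by positivity) hgap
    _ = 3 / c * (d : ℝ) ^ ρ₁ * L + 2 * (1 * 1) := by
        rw [div_div_eq_mul_div]
        ring
    _ ≤ 3 / c * (d : ℝ) ^ m * L + 2 * ((d : ℝ) ^ m * L) := by
        gcongr
        exact one_le_pow₀ hd1
    _ = (3 / c + 2) * (d : ℝ) ^ m * L := by ring

lemma pow_mul_mul_rpow_neg_pow_le {d : ℝ} (hd : 0 < d) {B : ℝ} (hB : 0 ≤ B)
    (hB1 : B * d ^ (-1 / 4 : ℝ) ≤ 1) {m K : ℕ} (hK : 4 * (m + 1) ≤ K) :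
    d ^ m * (B * d ^ (-1 / 4 : ℝ)) ^ K ≤ B ^ (4 * (m + 1)) / d :=
  calc d ^ m * (B * d ^ (-1 / 4 : ℝ)) ^ K
      ≤ d ^ m * (B * d ^ (-1 / 4 : ℝ)) ^ (4 * (m + 1)) := by
        gcongr ?_ * ?_
        exact pow_le_pow_of_le_one (by positivity) hB1 hK
    _ = B ^ (4 * (m + 1)) / d := by
        have hroot : (d ^ (-1 / 4 : ℝ)) ^ 4 = d⁻¹ := by
          rw [← Real.rpow_mul_natCast hd.le, ← Real.rpow_neg_one]
          norm_num
        rw [mul_pow, pow_mul (d ^ _), hroot, inv_pow, pow_succ d m]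
        field_simp

lemma mixingTime_add_one_mul_mul_pow_le (hreg : G.IsRegularOfDegree d) (hd : 0 < d)
    {c ρ₁ : ℝ} (hc : 0 < c) (hgap : SpectralGapLB G d (c / (d : ℝ) ^ ρ₁)) {m : ℕ} (hm : ρ₁ ≤ m)
    {K : ℕ} (hKm : 4 * (m + 1) ≤ K) (hlog : 1 ≤ Real.log (Fintype.card W)) {A : ℕ} {E B : ℝ}
    (hE : 0 ≤ E) (hB : 0 ≤ B) (hlogE : Real.log (Fintype.card W) ^ (A + 1) ≤ E ^ K)
    (hEBd : E * B * (d : ℝ) ^ (-1 / 4 : ℝ) ≤ 1) {s : ℕ}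
    (hs : (s : ℝ) ≤ Real.log (Fintype.card W) ^ A) :
    (mixingTime G d + 1) * (s * (B * (d : ℝ) ^ (-1 / 4 : ℝ)) ^ K)
      ≤ (3 / c + 2) * ((E * B) ^ (4 * (m + 1)) / d) := by
  have hd0 : (0 : ℝ) < d := mod_cast hd
  set L := Real.log (Fintype.card W)
  set θ := (d : ℝ) ^ (-1 / 4 : ℝ)
  calc (mixingTime G d + 1) * (s * (B * θ) ^ K)
      ≤ (3 / c + 2) * (d : ℝ) ^ m * L * (L ^ A * (B * θ) ^ K) := by
        gcongr
        exact mixingTime_add_one_le hreg hd hc hgap hm hlog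
    _ = (3 / c + 2) * (d : ℝ) ^ m * (L ^ (A + 1) * (B * θ) ^ K) := by ring
    _ ≤ (3 / c + 2) * (d : ℝ) ^ m * (E ^ K * (B * θ) ^ K) := by gcongr
    _ = (3 / c + 2) * ((d : ℝ) ^ m * (E * B * θ) ^ K) := by
        rw [← mul_pow, ← mul_assoc E, mul_assoc]
    _ ≤ (3 / c + 2) * ((E * B) ^ (4 * (m + 1)) / d) := by
        gcongr
        exact pow_mul_mul_rpow_neg_pow_le hd0 (by positivity) hEBd hKm

lemma expectedVisits_contractedLazy_mem_Icc (hreg : G.IsRegularOfDegree d) (hd : 0 < d)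
    {c ρ₁ : ℝ} (hc : 0 < c) (hgap : SpectralGapLB G d (c / (d : ℝ) ^ ρ₁)) {m : ℕ} (hm : ρ₁ ≤ m)
    {ε ρ₂ : ℝ} (hP3 : PropP3 G d ε ρ₂) (hρ₂ : 0 ≤ ρ₂) {K : ℕ} (hK : (K : ℝ) ≤ (d : ℝ) ^ ε)
    (hKsqrt : (K : ℝ) ≤ (d : ℝ) ^ (1 / 2 : ℝ)) (hKm : 4 * (m + 1) ≤ K)
    (hlog : 1 ≤ Real.log (Fintype.card W)) {A : ℕ} {E : ℝ} (hE : 1 ≤ E)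
    (hlogE : Real.log (Fintype.card W) ^ (A + 1) ≤ E ^ K)
    (hEd : E ^ 2 * (1 + ρ₂) * (d : ℝ) ^ (-1 / 4 : ℝ) < 1 / 2) {S : Finset W} (hS : S.Nonempty)
    (hSlog : (#S : ℝ) ≤ Real.log (Fintype.card W) ^ A) :
    expectedVisits (contractedLazy G d S) (Sum.inr ()) (mixingTime G d) ∈
      Set.Icc (2 - 2 / (Fintype.card W : ℝ))
        ((1 + (3 / c + 2) * ((E ^ 2 * (1 + ρ₂)) ^ (4 * (m + 1)) / d)) /
          (2⁻¹ - E ^ 2 * (1 + ρ₂) * (d : ℝ) ^ (-1 / 4 : ℝ))) := by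
  have : Nonempty W := hS.to_type
  have : (0 : ℝ) < d := mod_cast hd
  have hlogE_sq : Real.log (Fintype.card W) ^ (A + 1) ≤ (E ^ 2) ^ K :=
    hlogE.trans (pow_le_pow_left₀ (by positivity) (le_self_pow₀ hE two_ne_zero) K)
  have herror := mixingTime_add_one_mul_mul_pow_le hreg hd hc hgap hm hKm hlog (by positivity)
    (by positivity) hlogE_sq (hEd.le.trans (by norm_num)) hSlog
  have hSE : (#S : ℝ) ≤ E ^ K :=
    hSlog.trans ((pow_le_pow_right₀ hlog A.le_succ).trans hlogE)
  have hupper := mul_expectedVisits_contractedLazy_le hreg hd hS (by omega) (by positivity) hE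
    (fun k hk => simpleStep_pow_apply_le_pow hreg hd hP3 hρ₂ hK hKsqrt hk) hSE
    ((mul_assoc ..).symm.trans_le hEd.le) (mixingTime G d)
  have hlower := two_sub_two_inv_pow_le_expectedVisits
    (Matrix.mem_rowStochastic.1 (contractedLazy_mem_rowStochastic hreg hd hS)).1
    (two_inv_le_contractedLazy_inr_inr G d S) (mixingTime G d)
  have hmix := two_inv_pow_mixingTime_le hreg hd (by positivity) hgap
  rw [← mul_assoc] at hupper
  refine ⟨by linarith, ?_⟩
  rw [le_div_iff₀' (by linarith)]
  linarith

end FixedGraph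

section Asymptotics

variable {ι : Type*} {l : Filter ι}

lemma pow_le_exp_pow_floor_rpow {L d ε : ℝ} (hL : 1 ≤ L) (hε : 0 < ε)
    (hlog : Real.log L ^ (2 / ε) ≤ d) (hd : 1 ≤ d) (n : ℕ) :
    L ^ n ≤ Real.exp (2 * n) ^ ⌊d ^ (ε / 2)⌋₊ := by
  set K := ⌊d ^ (ε / 2)⌋₊
  have hL0 : 0 < L := by positivity
  have hlogK : Real.log L ≤ 2 * K :=
    calc Real.log L ≤ d ^ (2 / ε)⁻¹ :=
          (Real.le_rpow_inv_iff_of_pos (Real.log_nonneg hL) (by positivity) (by positivity)).2 hlog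
      _ = d ^ (ε / 2) := by rw [inv_div]
      _ ≤ K + 1 := (Nat.lt_floor_add_one _).le
      _ ≤ K + K := by
        gcongr
        exact_mod_cast Nat.le_floor (by exact_mod_cast Real.one_le_rpow hd (by positivity))
      _ = 2 * K := (two_mul _).symm
  calc L ^ n = Real.exp (n * Real.log L) := by rw [Real.exp_nat_mul, Real.exp_log hL0]
    _ ≤ Real.exp (n * (2 * K)) := by gcongr
    _ = Real.exp (2 * n) ^ K := by
      rw [← Real.exp_nat_mul]
      congr 1
      ring

lemma tendsto_rpow_half_atTop {d ε : ι → ℝ} (hd : Tendsto d l atTop)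
    (hεd : Tendsto (fun i => ε i * Real.log (d i)) l atTop) :
    Tendsto (fun i => d i ^ (ε i / 2)) l atTop := by
  refine (Real.tendsto_exp_atTop.comp (hεd.atTop_div_const two_pos)).congr' ?_
  filter_upwards [hd.eventually_gt_atTop 0] with i hi
  rw [Function.comp_apply, Real.rpow_def_of_pos hi]
  congr 1
  ring

lemma tendsto_const_mul_rpow_neg_quarter {d : ι → ℝ} (hd : Tendsto d l atTop) (B : ℝ) :
    Tendsto (fun i => B * d i ^ (-1 / 4 : ℝ)) l (𝓝 0) := by
  rw [neg_div]
  simpa only [mul_zero, Function.comp_apply] using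
    ((tendsto_rpow_neg_atTop (by norm_num : (0 : ℝ) < 1 / 4)).comp hd).const_mul B

lemma tendsto_one_add_div_two_inv_sub {d : ι → ℝ} (hd : Tendsto d l atTop) (B C D : ℝ) :
    Tendsto (fun i => (1 + C * (D / d i)) / (2⁻¹ - B * d i ^ (-1 / 4 : ℝ))) l (𝓝 2) := by
  have hlim := (((hd.const_div_atTop D).const_mul C).const_add 1).div
    ((tendsto_const_mul_rpow_neg_quarter hd B).const_sub 2⁻¹) (by norm_num)
  rwa [mul_zero, add_zero, sub_zero, one_div, inv_inv] at hlim

lemma eventually_ceil_two_mul_div_mem_Ioc {f g : ι → ℝ} (hf : Tendsto f l atTop)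
    (hg : Tendsto g l atTop) : ∀ᶠ i in l, (⌈2 * f i / g i⌉₊ : ℝ) ∈ Set.Ioc 0 (f i) := by
  filter_upwards [hf.eventually_ge_atTop 2, hg.eventually_ge_atTop 4] with i hfi hgi
  have hpos : 0 < 2 * f i / g i := by positivity
  have hhalf : 2 * f i / g i ≤ f i / 2 := by
    rw [div_le_div_iff₀ (by positivity) two_pos]
    nlinarith
  exact ⟨mod_cast Nat.ceil_pos.2 hpos, by linarith [Nat.ceil_lt_add_one hpos.le]⟩

theorem contracted_returns_estimate_general {V : ι → Type*} [∀ i, Fintype (V i)]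
    [∀ i, DecidableEq (V i)] {G : ∀ i, SimpleGraph (V i)} {d : ι → ℕ} {ε : ι → ℝ} {c ρ₁ ρ₂ : ℝ}
    (A : ℕ) (hreg : ∀ i, (G i).IsRegularOfDegree (d i))
    (hd : Tendsto (fun i => (d i : ℝ)) l atTop) (hε : ∀ i, ε i ≤ 1)
    (hεd : Tendsto (fun i => ε i * Real.log (d i)) l atTop) (hc : 0 < c)
    (hP1 : ∀ i, SpectralGapLB (G i) (d i) (c / (d i : ℝ) ^ ρ₁))
    (hP2 : Tendsto (fun i => Real.log (Real.log (Fintype.card (V i))) ^ (2 / ε i) / (d i : ℝ))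
      l (𝓝 0))
    (hρ₂ : 0 ≤ ρ₂) (hP3 : ∀ i, PropP3 (G i) (d i) (ε i) ρ₂) {δ : ℝ} (hδ : 0 < δ) :
    ∀ᶠ i in l, ∀ S : Finset (V i), S.Nonempty → (#S : ℝ) ≤ Real.log (Fintype.card (V i)) ^ A →
      |expectedVisits (contractedLazy (G i) (d i) S) (Sum.inr ()) (mixingTime (G i) (d i)) - 2|
        ≤ δ := by
  set m := ⌈ρ₁⌉₊
  set E := Real.exp (2 * (A + 1 : ℕ))
  set B := E ^ 2 * (1 + ρ₂)
  have hlower : Tendsto (fun i => 2 - 2 / (d i : ℝ)) l (𝓝 2) := by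
    simpa only [sub_zero] using (hd.const_div_atTop 2).const_sub 2
  have hupper := tendsto_one_add_div_two_inv_sub hd B (3 / c + 2) (B ^ (4 * (m + 1)))
  filter_upwards [hd.eventually_ge_atTop 3, hεd.eventually_gt_atTop 0,
    (tendsto_nat_floor_atTop.comp (tendsto_rpow_half_atTop hd hεd)).eventually_ge_atTop
      (4 * (m + 1)), hP2.eventually_le_const one_pos,
    (tendsto_const_mul_rpow_neg_quarter hd B).eventually_lt_const one_half_pos,
    hlower.eventually_const_le (sub_lt_self 2 hδ),
    hupper.eventually_le_const (lt_add_of_pos_right 2 hδ)]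
    with i hd3 hεdi hKm hP2i hBd hlo hup S hS hSlog
  have hd1 : (1 : ℝ) ≤ d i := by linarith
  have hd0 : 0 < d i := by exact_mod_cast hd1
  have hεi : 0 < ε i := (pos_iff_pos_of_mul_pos hεdi).2 (Real.log_pos (by linarith))
  have hdN : (d i : ℝ) ≤ Fintype.card (V i) := by
    rw [← hreg i hS.choose]
    exact_mod_cast ((G i).degree_lt_card_verts _).le
  have hlog : 1 ≤ Real.log (Fintype.card (V i)) := by
    rw [Real.le_log_iff_exp_le (by linarith)]
    linarith [Real.exp_one_lt_three]
  have hK : (⌊(d i : ℝ) ^ (ε i / 2)⌋₊ : ℝ) ≤ (d i : ℝ) ^ (ε i / 2) := Nat.floor_le (by positivity)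
  have hmem := expectedVisits_contractedLazy_mem_Icc (hreg i) hd0 hc (hP1 i) (Nat.le_ceil ρ₁)
    (hP3 i) hρ₂ (hK.trans (Real.rpow_le_rpow_of_exponent_le hd1 (by linarith)))
    (hK.trans (Real.rpow_le_rpow_of_exponent_le hd1 (by linarith [hε i]))) hKm hlog
    (Real.one_le_exp (by positivity))
    (pow_le_exp_pow_floor_rpow hlog hεi ((div_le_one₀ (by positivity)).1 hP2i) hd1 (A + 1))
    hBd hS hSlog
  have hcard : 2 / (Fintype.card (V i) : ℝ) ≤ 2 / d i := by gcongr
  rw [abs_sub_le_iff]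
  exact ⟨by linarith [hmem.2], by linarith [hmem.1]⟩

end Asymptotics

/-- **Lemma 10**: with `s = ⌈2 log n/(ε log d)⌉`, uniformly over all vertex
sets `S` of size `s` inducing a connected subgraph, the expected number
`R_{γ_S}` of visits to the contracted vertex `γ_S` within the (uncontracted)
mixing time `T` by the lazy walk on the contracted multigraph started at `γ_S`
satisfies `R_{γ_S} = 2 + o(1)`.  (The `n`-th graph has `n + 1` vertices.) -/
theorem contracted_returns_estimate
    (G : ∀ n : ℕ, SimpleGraph (Fin (n + 1))) (d : ℕ → ℕ) (ε : ℕ → ℝ)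
    (u : ∀ n : ℕ, Fin (n + 1))
    (hreg : ∀ n, (G n).IsRegularOfDegree (d n))
    (hconn : ∀ n, (G n).Connected)
    (hd : Tendsto (fun n => (d n : ℝ)) atTop atTop)
    (hε : ∀ n, 0 < ε n ∧ ε n < 1)
    (hεd : Tendsto (fun n => ε n * Real.log (d n)) atTop atTop)
    (hP1 : ∃ c₁ ρ₁ : ℝ, 0 < c₁ ∧ 0 < ρ₁ ∧ ρ₁ ≤ 3 ∧
      ∀ n, SpectralGapLB (G n) (d n) (c₁ / (d n : ℝ) ^ ρ₁))
    (hP2a : Tendsto (fun n : ℕ => Real.log (Real.log ((n : ℝ) + 1)) ^ (2 / ε n) / (d n : ℝ))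
      atTop (nhds 0))
    (hP2b : ∃ c₂ : ℝ, 0 < c₂ ∧ ∀ n, 1 ≤ n →
      (d n : ℝ) ≤ c₂ * (((n : ℝ) + 1) / Real.log ((n : ℝ) + 1)) ^ ((1 : ℝ) / 5))
    (hP3 : ∃ ρ₂ : ℝ, 0 < ρ₂ ∧ ∀ n, PropP3 (G n) (d n) (ε n) ρ₂)
    (hP4 : ∀ δ : ℝ, 0 < δ → ∃ δ' : ℝ, 0 < δ' ∧ ∃ n₀ : ℕ, ∀ n, n₀ ≤ n →
      ∀ S : Finset (Fin (n + 1)), (S.card : ℝ) ≤ δ' * Real.log ((n : ℝ) + 1) →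
        (edgesInside (G n) S : ℝ) ≤ δ * (d n : ℝ) * (S.card : ℝ)) :
    ∀ δ : ℝ, 0 < δ → ∃ n₀ : ℕ, ∀ n, n₀ ≤ n →
      ∀ S : Finset (Fin (n + 1)),
        S.card = Nat.ceil (2 * Real.log ((n : ℝ) + 1) / (ε n * Real.log (d n))) →
        ((G n).induce (S : Set (Fin (n + 1)))).Connected →
        |(∑ k ∈ Finset.range (mixingTime (G n) (d n) + 1),
            ((contractedLazy (G n) (d n) S) ^ k) (Sum.inr ()) (Sum.inr ())) - 2| ≤ δ := by
  intro δ hδ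
  obtain ⟨c, ρ₁, hc, -, -, hgap⟩ := hP1
  obtain ⟨ρ₂, hρ₂, hdrift⟩ := hP3
  have hcard : Tendsto (fun n : ℕ => (n : ℝ) + 1) atTop atTop :=
    tendsto_atTop_add_const_right _ _ tendsto_natCast_atTop_atTop
  rw [← eventually_atTop]
  filter_upwards [eventually_ceil_two_mul_div_mem_Ioc (Real.tendsto_log_atTop.comp hcard) hεd,
    contracted_returns_estimate_general 1 hreg hd (fun n => (hε n).2.le) hεd hc hgap
      (by simpa using hP2a) hρ₂.le hdrift hδ] with n hceil hreturns S hScard _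
  rw [Function.comp_apply, ← hScard] at hceil
  exact hreturns S (card_pos.1 (mod_cast hceil.1)) (by simpa using hceil.2)

end
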